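/- Let (ρ, u) be a weak solution of the stationary isentropic Navier–Stokes system on ℝ³ with exponent γ ≥ 6 and potential G ∈ D₀^{1, 6γ/(5γ−6)}(ℝ³). If ∫_{ℝ³} ( (1/2) ρ|u|² + ρ^γ/(γ−1) ) dx < ∞, then ρ ∈ L^{2γ}(ℝ³). -/

import Mathlib

noncomputable section

open MeasureTheory Metric Filter Topology Set

/-- Three-dimensional Euclidean space. -/
abbrev E3 : Type := EuclideanSpace ℝ (Fin 3)

/-- Partial derivative of a scalar function in the `i`-th coordinate direction. -/
def pd (f : E3 → ℝ) (i : Fin 3) : E3 → ℝ :=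
  fun x => fderiv ℝ f x (EuclideanSpace.single i 1)

/-- Classical gradient matrix of a vector field: `(tgrad φ x) i j = ∂_j φ_i (x)`. -/
def tgrad (φ : E3 → Fin 3 → ℝ) (x : E3) : Fin 3 → Fin 3 → ℝ :=
  fun i j => pd (fun y => φ y i) j x

/-- Smooth compactly supported scalar test function with support in `Ω`. -/
def IsTest (Ω : Set E3) (φ : E3 → ℝ) : Prop :=
  ContDiff ℝ ((⊤ : ℕ∞) : WithTop ℕ∞) φ ∧ HasCompactSupport φ ∧ tsupport φ ⊆ Ω

/-- `C^n` compactly supported vector-valued test function with support in `Ω`. -/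
def IsTestVec (n : WithTop ℕ∞) (Ω : Set E3) (φ : E3 → Fin 3 → ℝ) : Prop :=
  ContDiff ℝ n φ ∧ HasCompactSupport φ ∧ tsupport φ ⊆ Ω

/-- The Newtonian viscous stress tensor
`S(M) = μ (M + Mᵗ - (2/3) (tr M) I) + η (tr M) I`. -/
def Smat (μ η : ℝ) (M : Fin 3 → Fin 3 → ℝ) : Fin 3 → Fin 3 → ℝ :=
  fun i j =>
    μ * (M i j + M j i - (2 / 3) * (∑ k, M k k) * (if i = j then (1 : ℝ) else 0))
      + η * (∑ k, M k k) * (if i = j then (1 : ℝ) else 0)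

/-- `dG` is the weak gradient of the scalar function `G` on `Ω`. -/
def HasWeakGradOn (Ω : Set E3) (G : E3 → ℝ) (dG : E3 → Fin 3 → ℝ) : Prop :=
  ∀ φ : E3 → ℝ, IsTest Ω φ → ∀ i : Fin 3,
    ∫ x in Ω, G x * pd φ i x = - ∫ x in Ω, dG x i * φ x

/-- `du` is the weak gradient (Jacobian) of the vector field `u` on `Ω`. -/
def HasWeakGradVecOn (Ω : Set E3) (u : E3 → Fin 3 → ℝ) (du : E3 → Fin 3 → Fin 3 → ℝ) : Prop :=
  ∀ φ : E3 → ℝ, IsTest Ω φ → ∀ i j : Fin 3,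
    ∫ x in Ω, u x i * pd φ j x = - ∫ x in Ω, du x i j * φ x

/-- `u ∈ D₀^{1,2}(Ω; ℝ³)` with weak gradient `du`: `u` is locally integrable on `Ω`, its weak
gradient belongs to `L²(Ω)`, and `u` can be approximated by smooth compactly supported fields
`uₙ` with `∇uₙ → ∇u` in `L²(Ω)` and `uₙ → u` in `L⁶(Ω)`. -/
def MemD012 (Ω : Set E3) (u : E3 → Fin 3 → ℝ) (du : E3 → Fin 3 → Fin 3 → ℝ) : Prop :=
  LocallyIntegrableOn u Ω volume ∧
  HasWeakGradVecOn Ω u du ∧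
  MemLp du 2 (volume.restrict Ω) ∧
  ∃ un : ℕ → E3 → Fin 3 → ℝ,
    (∀ n, IsTestVec ((⊤ : ℕ∞) : WithTop ℕ∞) Ω (un n)) ∧
    Tendsto (fun n => eLpNorm (fun x => tgrad (un n) x - du x) 2 (volume.restrict Ω))
      atTop (𝓝 0) ∧
    Tendsto (fun n => eLpNorm (fun x => un n x - u x) 6 (volume.restrict Ω)) atTop (𝓝 0)

/-- `G ∈ D₀^{1,q}(Ω)` with weak gradient `dG`. -/
def MemD01q (Ω : Set E3) (G : E3 → ℝ) (dG : E3 → Fin 3 → ℝ) (q : ℝ) : Prop :=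
  HasWeakGradOn Ω G dG ∧
  MemLp dG (ENNReal.ofReal q) (volume.restrict Ω) ∧
  ∃ Gn : ℕ → E3 → ℝ,
    (∀ n, IsTest Ω (Gn n)) ∧
    Tendsto (fun n =>
        eLpNorm (fun x => (fun i => pd (Gn n) i x) - dG x) (ENNReal.ofReal q)
          (volume.restrict Ω)) atTop (𝓝 0) ∧
    ∀ K : Set E3, IsCompact K → K ⊆ Ω →
      Tendsto (fun n => ∫ x in K, |Gn n x - G x|) atTop (𝓝 0)

/-- `G ∈ W^{1,∞}(Ω)` with weak gradient `dG`: both `G` and `∇G` are essentially bounded. -/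
def MemW1inf (Ω : Set E3) (G : E3 → ℝ) (dG : E3 → Fin 3 → ℝ) : Prop :=
  HasWeakGradOn Ω G dG ∧
  MemLp G ⊤ (volume.restrict Ω) ∧ MemLp dG ⊤ (volume.restrict Ω)

/-- Weak solution `(ρ, u)` (with weak gradient `du` of `u` and weak gradient `dG` of `G`) of the
stationary barotropic Navier–Stokes system
`div(ρu) = 0`, `div(ρ u⊗u) + ∇p(ρ) − div S(∇u) = ρ∇G` on `Ω` with no-slip boundary condition. -/
structure WeakSolution (Ω : Set E3) (μ η : ℝ) (p : ℝ → ℝ)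
    (G : E3 → ℝ) (dG : E3 → Fin 3 → ℝ)
    (ρ : E3 → ℝ) (u : E3 → Fin 3 → ℝ) (du : E3 → Fin 3 → Fin 3 → ℝ) : Prop where
  aemeas_ρ : AEMeasurable ρ volume
  aemeas_u : AEMeasurable u volume
  weakGrad_G : HasWeakGradOn Ω G dG
  ρ_nonneg : ∀ᵐ x ∂(volume.restrict Ω), 0 ≤ ρ x
  ρu_locInt : LocallyIntegrableOn (fun x => fun i => ρ x * u x i) (closure Ω) volume
  mass : ∀ φ : E3 → ℝ, ContDiff ℝ ((⊤ : ℕ∞) : WithTop ℕ∞) φ → HasCompactSupport φ →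
    ∫ x in Ω, ρ x * (∑ i, u x i * pd φ i x) = 0
  ρ_locInt : LocallyIntegrableOn ρ Ω volume
  ρu2_locInt : LocallyIntegrableOn (fun x => ρ x * (∑ i, (u x i) ^ 2)) Ω volume
  pρ_locInt : LocallyIntegrableOn (fun x => p (ρ x)) Ω volume
  ρdG_locInt : LocallyIntegrableOn (fun x => fun i => ρ x * dG x i) Ω volume
  u_D012 : MemD012 Ω u du
  momentum : ∀ φ : E3 → Fin 3 → ℝ, IsTestVec 1 Ω φ →
    ∫ x in Ω, ((∑ i, ∑ j, ρ x * u x i * u x j * tgrad φ x i j)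
        + p (ρ x) * (∑ i, tgrad φ x i i))
      = (∫ x in Ω, ∑ i, ∑ j, Smat μ η (du x) i j * tgrad φ x i j)
        - ∫ x in Ω, ∑ i, ρ x * dG x i * φ x i

/-- Weak solution of the stationary isentropic Navier–Stokes system on `ℝ³`
with pressure `p(ρ) = ρ^γ`. -/
def IsentropicWeakSolution (μ η γ : ℝ) (G : E3 → ℝ) (dG : E3 → Fin 3 → ℝ)
    (ρ : E3 → ℝ) (u : E3 → Fin 3 → ℝ) (du : E3 → Fin 3 → Fin 3 → ℝ) : Prop :=
  WeakSolution univ μ η (fun s => s ^ γ) G dG ρ u du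

/-- The `L^r` norm of a scalar function on a set. -/
def lpNormOn (f : E3 → ℝ) (r : ℝ) (s : Set E3) : ℝ :=
  (∫ x in s, |f x| ^ r) ^ (1 / r)

/-- Euclidean norm of a vector in `ℝ³` (represented as `Fin 3 → ℝ`). -/
def vnorm (v : Fin 3 → ℝ) : ℝ := Real.sqrt (∑ i, (v i) ^ 2)

/-- The `L^r` norm of a vector field on a set. -/
def vecLpNormOn (u : E3 → Fin 3 → ℝ) (r : ℝ) (s : Set E3) : ℝ :=
  (∫ x in s, (vnorm (u x)) ^ r) ^ (1 / r)

/-- The exponent `f(α, γ)` from the higher-integrability propositions. -/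
def fExp (α γ : ℝ) : ℝ :=
  if 6 ≤ γ then
    (if (2 * γ - 3) / (γ * (γ - 1)) ≤ α then α - 3 / (2 * γ)
     else α / γ + 1 / (2 * γ) - 3 / γ ^ 2)
  else
    (if 3 / (2 * (γ - 1)) ≤ α then α - 3 / (2 * γ)
     else if 1 / (2 * (γ - 1)) ≤ α then α / γ
     else α / γ ^ 2 + 1 / (2 * γ ^ 2))

/-- The exponent `g(α, β, γ)`. -/
def gExp (α β γ : ℝ) : ℝ :=
  if fExp α γ ≤ (γ - 3) / (γ * (3 * γ - 5)) then
    γ * (1 - fExp α γ) * (6 - β) / (3 * β * (γ - 1))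
  else (1 - γ * fExp α γ) * (6 - β) / (2 * β)

/-!
Testing the momentum equation with `φ = ∇χ`, `χ ∈ C_c^∞(ℝ³)`, isolates the pressure `p = ρ^γ`:
`∫ p Δχ = ∫ (S(∇u) - ρ u ⊗ u) : ∇²χ - ∫ ρ ∇G · ∇χ`. The stress is in `L²`, and for `γ ≥ 6` so is
`ρ u ⊗ u`, being integrable and, by Hölder with `ρ ∈ L^γ` and `u ∈ L⁶`, in some `L^r` with `r ≥ 2`;
the force is in `L^{6/5}`. Since `‖∇²χ‖₂ = ‖Δχ‖₂` and `‖∇χ‖₆ ≲ ‖∇²χ‖₂`, the right-hand side is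
bounded by `C ‖Δχ‖₂`, so by Hahn–Banach and Riesz there is `g ∈ L²` with `∫ p Δχ = ∫ g Δχ` for all
`χ`. Mollifications of `p - g` are harmonic and, as `p ∈ L¹`, square integrable, hence zero by
Caccioppoli's inequality. Thus `p = g ∈ L²`, that is, `ρ ∈ L^{2γ}`.
-/

open ContinuousLinearMap (mul lsmul)
open scoped SchwartzMap LineDeriv Laplacian Convolution ContDiff ENNReal NNReal
open scoped RealInnerProductSpace

section IntegrationByParts

variable {E : Type*} [NormedAddCommGroup E] [NormedSpace ℝ E]

theorem differentiable_fderiv_of_contDiff_two {f : E → ℝ} (hf : ContDiff ℝ 2 f) :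
    Differentiable ℝ (fderiv ℝ f) :=
  (hf.fderiv_right (m := 1) (by norm_num)).differentiable one_ne_zero

variable [FiniteDimensional ℝ E] [MeasurableSpace E] [BorelSpace E]
  {ν : Measure E} [ν.IsAddHaarMeasure]

theorem integral_mul_fderiv_eq_neg_fderiv_mul {f g : E → ℝ} (hf : ContDiff ℝ 1 f)
    (hg : ContDiff ℝ 1 g) (hgc : HasCompactSupport g) (v : E) :
    ∫ x, f x * fderiv ℝ g x v ∂ν = -∫ x, fderiv ℝ f x v * g x ∂ν := by
  have hdf : Continuous fun x ↦ fderiv ℝ f x v := (hf.continuous_fderiv one_ne_zero).clm_apply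
    continuous_const
  have hdg : Continuous fun x ↦ fderiv ℝ g x v := (hg.continuous_fderiv one_ne_zero).clm_apply
    continuous_const
  refine integral_mul_fderiv_eq_neg_fderiv_mul_of_integrable ?_ ?_ ?_ ?_ ?_
  · exact (hdf.mul hg.continuous).integrable_of_hasCompactSupport hgc.mul_left
  · exact (hf.continuous.mul hdg).integrable_of_hasCompactSupport (hgc.fderiv_apply ℝ v).mul_left
  · exact (hf.continuous.mul hg.continuous).integrable_of_hasCompactSupport hgc.mul_left
  · exact fun x _ ↦ hf.differentiable one_ne_zero x
  · exact fun x _ ↦ hg.differentiable one_ne_zero x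

end IntegrationByParts

section Laplacian

variable {E : Type*} [NormedAddCommGroup E] [InnerProductSpace ℝ E]

theorem norm_sq_eq_sum_apply_sq {ι : Type*} [Fintype ι] [CompleteSpace E]
    (b : OrthonormalBasis ι ℝ E) (L : E →L[ℝ] ℝ) : ‖L‖ ^ 2 = ∑ i, L (b i) ^ 2 := by
  rw [← (InnerProductSpace.toDual ℝ E).symm.norm_map, ← b.sum_sq_inner_left]
  simp only [InnerProductSpace.toDual_symm_apply]

variable [FiniteDimensional ℝ E]

theorem laplacian_eq_sum_fderiv_fderiv {ι : Type*} [Fintype ι] (b : OrthonormalBasis ι ℝ E)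
    {f : E → ℝ} (hf : ContDiff ℝ 2 f) (x : E) :
    Δ f x = ∑ i, fderiv ℝ (fun y ↦ fderiv ℝ f y (b i)) x (b i) := by
  have hdf : Differentiable ℝ (fderiv ℝ f) := differentiable_fderiv_of_contDiff_two hf
  rw [InnerProductSpace.laplacian_eq_iteratedFDeriv_orthonormalBasis f b]
  refine Finset.sum_congr rfl fun i _ ↦ ?_
  rw [iteratedFDeriv_two_apply, fderiv_clm_apply hdf.differentiableAt (by fun_prop)]
  simp

theorem continuous_laplacian {f : E → ℝ} (hf : ContDiff ℝ 2 f) : Continuous (Δ f) := by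
  have : Continuous (iteratedFDeriv ℝ 2 f) := hf.continuous_iteratedFDeriv'
  rw [InnerProductSpace.laplacian_eq_iteratedFDeriv_stdOrthonormalBasis]
  fun_prop

theorem hasCompactSupport_laplacian {f : E → ℝ} (hf : HasCompactSupport f) :
    HasCompactSupport (Δ f) := by
  rw [InnerProductSpace.laplacian_eq_iteratedFDeriv_stdOrthonormalBasis]
  refine (hf.iteratedFDeriv (𝕜 := ℝ) 2).mono fun x hx h ↦ hx ?_
  simp [h]

theorem laplacian_sq {f : E → ℝ} (hf : ContDiff ℝ 2 f) (x : E) :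
    Δ (fun y ↦ f y ^ 2) x = 2 * ‖fderiv ℝ f x‖ ^ 2 + 2 * (f x * Δ f x) := by
  let b := stdOrthonormalBasis ℝ E
  have hdf : Differentiable ℝ f := hf.differentiable (by norm_num)
  have : Differentiable ℝ (fderiv ℝ f) := differentiable_fderiv_of_contDiff_two hf
  have fderiv_sq (v y : E) : fderiv ℝ (fun y ↦ f y ^ 2) y v = 2 * f y * fderiv ℝ f y v := by
    simp [fderiv_fun_pow 2 (hdf y)]
  rw [laplacian_eq_sum_fderiv_fderiv b (hf.pow 2), laplacian_eq_sum_fderiv_fderiv b hf,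
    norm_sq_eq_sum_apply_sq b, Finset.mul_sum, Finset.mul_sum, Finset.mul_sum,
    ← Finset.sum_add_distrib]
  refine Finset.sum_congr rfl fun i _ ↦ ?_
  simp_rw [fderiv_sq]
  rw [fderiv_fun_mul (by fun_prop) (by fun_prop), fderiv_const_mul (hdf x)]
  simp only [add_apply, smul_apply, smul_eq_mul]
  ring

theorem laplacian_comp_add_smul {f : E → ℝ} (hf : ContDiff ℝ 2 f) (a : E) (c : ℝ) (x : E) :
    Δ (fun y ↦ f (a + c • y)) x = c ^ 2 * Δ f (a + c • x) := by
  let b := stdOrthonormalBasis ℝ E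
  have hdf : Differentiable ℝ f := hf.differentiable (by norm_num)
  have : Differentiable ℝ (fderiv ℝ f) := differentiable_fderiv_of_contDiff_two hf
  have fderiv_comp {g : E → ℝ} (hg : Differentiable ℝ g) (v y : E) :
      fderiv ℝ (fun y ↦ g (a + c • y)) y v = c * fderiv ℝ g (a + c • y) v := by
    have := (hg (a + c • y)).hasFDerivAt.comp y (((hasFDerivAt_id y).const_smul c).const_add a)
    rw [HasFDerivAt.fderiv (f := fun y ↦ g (a + c • y)) this]
    simp
  rw [laplacian_eq_sum_fderiv_fderiv b (by fun_prop), laplacian_eq_sum_fderiv_fderiv b hf,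
    Finset.mul_sum]
  refine Finset.sum_congr rfl fun i _ ↦ ?_
  simp_rw [fderiv_comp hdf]
  rw [fderiv_const_mul (by fun_prop), smul_apply,
    fderiv_comp (g := fun y ↦ fderiv ℝ f y (b i)) (by fun_prop), smul_eq_mul]
  ring

variable [MeasurableSpace E] [BorelSpace E]

theorem integral_mul_laplacian_eq_integral_laplacian_mul {f g : E → ℝ} (hf : ContDiff ℝ 2 f)
    (hg : ContDiff ℝ 2 g) (hgc : HasCompactSupport g) :
    ∫ x, f x * Δ g x = ∫ x, Δ f x * g x := by
  let b := stdOrthonormalBasis ℝ E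
  have hf₁ : ContDiff ℝ 1 f := hf.of_le one_le_two
  have hg₁ : ContDiff ℝ 1 g := hg.of_le one_le_two
  have contDiff_partial {w : E → ℝ} (hw : ContDiff ℝ 2 w) (i) :
      ContDiff ℝ 1 fun x ↦ fderiv ℝ w x (b i) :=
    (hw.fderiv_right (m := 1) le_rfl).clm_apply contDiff_const
  simp_rw [laplacian_eq_sum_fderiv_fderiv b hf, laplacian_eq_sum_fderiv_fderiv b hg,
    Finset.mul_sum, Finset.sum_mul]
  rw [integral_finsetSum, integral_finsetSum]
  · refine Finset.sum_congr rfl fun i _ ↦ ?_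
    rw [integral_mul_fderiv_eq_neg_fderiv_mul hf₁ (contDiff_partial hg i) (hgc.fderiv_apply ℝ _),
      integral_mul_fderiv_eq_neg_fderiv_mul (contDiff_partial hf i) hg₁ hgc, neg_neg]
  · exact fun i _ ↦ (((contDiff_partial hf i).continuous_fderiv one_ne_zero).clm_apply
      continuous_const |>.mul hg.continuous).integrable_of_hasCompactSupport hgc.mul_left
  · exact fun i _ ↦ (hf.continuous.mul <| ((contDiff_partial hg i).continuous_fderiv
      one_ne_zero).clm_apply continuous_const).integrable_of_hasCompactSupport
      ((hgc.fderiv_apply ℝ _).fderiv_apply ℝ _).mul_left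

theorem two_mul_integral_mul_norm_fderiv_sq {h ζ : E → ℝ} (hh : ContDiff ℝ 2 h) (hΔ : Δ h = 0)
    (hζ : ContDiff ℝ 2 ζ) (hζc : HasCompactSupport ζ) :
    2 * ∫ x, ζ x * ‖fderiv ℝ h x‖ ^ 2 = ∫ x, h x ^ 2 * Δ ζ x := by
  rw [integral_mul_laplacian_eq_integral_laplacian_mul (hh.pow 2) hζ hζc,
    ← integral_const_mul]
  congr with x
  rw [laplacian_sq hh, hΔ]
  simp only [Pi.zero_apply, mul_zero, add_zero]
  ring

end Laplacian

section Liouville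

variable {E : Type*} [NormedAddCommGroup E] [InnerProductSpace ℝ E] [FiniteDimensional ℝ E]
  [MeasurableSpace E] [BorelSpace E]

theorem exists_forall_setIntegral_ball_norm_fderiv_sq_le {h : E → ℝ} (hh : ContDiff ℝ 2 h)
    (hΔ : Δ h = 0) (hL2 : MemLp h 2) :
    ∃ C, ∀ R > 0, ∫ x in ball 0 R, ‖fderiv ℝ h x‖ ^ 2 ≤ C * (R⁻¹) ^ 2 := by
  let ζ : ContDiffBump (0 : E) := ⟨1, 2, one_pos, one_lt_two⟩
  have hζ : ContDiff ℝ 2 ζ := ζ.contDiff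
  obtain ⟨M, hM⟩ := (hasCompactSupport_laplacian ζ.hasCompactSupport).exists_bound_of_continuous
    (continuous_laplacian hζ)
  refine ⟨(∫ x, h x ^ 2) * M / 2, fun R hR ↦ ?_⟩
  let ζR : E → ℝ := fun x ↦ ζ (0 + R⁻¹ • x)
  have hζR : ContDiff ℝ 2 ζR := by fun_prop
  have hζRc : HasCompactSupport ζR := by
    simpa only [ζR, zero_add] using ζ.hasCompactSupport.comp_smul (inv_ne_zero hR.ne')
  have hcont : Continuous fun x ↦ ‖fderiv ℝ h x‖ ^ 2 := by
    have := hh.continuous_fderiv two_ne_zero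
    fun_prop
  have hint : Integrable fun x ↦ ζR x * ‖fderiv ℝ h x‖ ^ 2 :=
    (hζR.continuous.mul hcont).integrable_of_hasCompactSupport hζRc.mul_right
  have hcaccioppoli : 2 * ∫ x, ζR x * ‖fderiv ℝ h x‖ ^ 2 ≤ (∫ x, h x ^ 2) * M * (R⁻¹) ^ 2 := by
    rw [two_mul_integral_mul_norm_fderiv_sq hh hΔ hζR hζRc, mul_assoc, ← integral_mul_const]
    refine integral_mono (((hh.continuous.pow 2).mul
      (continuous_laplacian hζR)).integrable_of_hasCompactSupport
      (hasCompactSupport_laplacian hζRc).mul_left) (hL2.integrable_sq.mul_const _) fun x ↦ ?_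
    rw [laplacian_comp_add_smul hζ]
    have hMx := (le_abs_self _).trans (hM (0 + R⁻¹ • x))
    dsimp only
    rw [mul_comm M]
    gcongr
  have hball : ∫ x in ball 0 R, ‖fderiv ℝ h x‖ ^ 2 ≤ ∫ x, ζR x * ‖fderiv ℝ h x‖ ^ 2 := by
    have hone {x : E} (hx : x ∈ ball 0 R) : ζR x = 1 := ζ.one_of_mem_closedBall <| by
      rw [mem_ball_zero_iff] at hx
      simpa [ζ, norm_smul, abs_of_pos hR, inv_mul_le_iff₀ hR] using hx.le
    calc ∫ x in ball 0 R, ‖fderiv ℝ h x‖ ^ 2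
        = ∫ x in ball 0 R, ζR x * ‖fderiv ℝ h x‖ ^ 2 :=
          setIntegral_congr_fun measurableSet_ball fun x hx ↦ by simp only [hone hx, one_mul]
      _ ≤ ∫ x, ζR x * ‖fderiv ℝ h x‖ ^ 2 :=
          setIntegral_le_integral hint (.of_forall fun x ↦ mul_nonneg ζ.nonneg (sq_nonneg _))
  linarith

theorem fderiv_eq_zero_of_laplacian_eq_zero_of_memLp_two {h : E → ℝ} (hh : ContDiff ℝ 2 h)
    (hΔ : Δ h = 0) (hL2 : MemLp h 2) : fderiv ℝ h = 0 := by
  obtain ⟨C, hC⟩ := exists_forall_setIntegral_ball_norm_fderiv_sq_le hh hΔ hL2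
  have hcont : Continuous fun x ↦ ‖fderiv ℝ h x‖ ^ 2 := by
    have := hh.continuous_fderiv two_ne_zero
    fun_prop
  have hint (r : ℝ) : IntegrableOn (fun x ↦ ‖fderiv ℝ h x‖ ^ 2) (ball 0 r) :=
    (hcont.locallyIntegrable.integrableOn_isCompact (isCompact_closedBall 0 r)).mono_set
      ball_subset_closedBall
  have hzero (r : ℝ) : ∫ x in ball 0 r, ‖fderiv ℝ h x‖ ^ 2 = 0 := by
    have hlim : Tendsto (fun R : ℝ ↦ C * (R⁻¹) ^ 2) atTop (𝓝 0) := by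
      simpa using (tendsto_inv_atTop_zero.pow 2).const_mul C
    refine le_antisymm (ge_of_tendsto hlim ?_) (integral_nonneg fun x ↦ sq_nonneg _)
    filter_upwards [eventually_ge_atTop r, eventually_gt_atTop 0] with R hrR hR
    exact (setIntegral_mono_set (hint R) (.of_forall fun x ↦ sq_nonneg _)
      (ball_subset_ball hrR).eventuallyLE).trans (hC R hR)
  ext1 x
  have hae := (setIntegral_eq_zero_iff_of_nonneg_ae (.of_forall fun x ↦ sq_nonneg _)
    (hint (‖x‖ + 1))).1 (hzero (‖x‖ + 1))
  have heq := Measure.eqOn_open_of_ae_eq hae isOpen_ball hcont.continuousOn continuousOn_const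
  simpa using heq (show x ∈ ball 0 (‖x‖ + 1) by simp)

theorem eq_zero_of_laplacian_eq_zero_of_memLp_two [Nontrivial E] {h : E → ℝ}
    (hh : ContDiff ℝ 2 h) (hΔ : Δ h = 0) (hL2 : MemLp h 2) : h = 0 := by
  have hconst : h = fun _ ↦ h 0 := funext fun x ↦
    is_const_of_fderiv_eq_zero (𝕜 := ℝ) (hh.differentiable two_ne_zero)
      (congrFun (fderiv_eq_zero_of_laplacian_eq_zero_of_memLp_two hh hΔ hL2)) x 0
  rw [hconst, memLp_const_iff two_ne_zero ENNReal.ofNat_ne_top] at hL2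
  rcases hL2 with h0 | hfin
  · rw [hconst, h0]; rfl
  · have : NoncompactSpace E := NormedSpace.noncompactSpace ℝ E
    exact absurd (measure_univ_of_isAddLeftInvariant volume) hfin.ne

end Liouville

section Young

theorem rpow_lintegral_mul_le {α : Type*} [MeasurableSpace α] {ν : Measure α} {f g : α → ℝ≥0∞}
    (hf : AEMeasurable f ν) (hg : AEMeasurable g ν) {p : ℝ} (hp : 1 ≤ p) :
    (∫⁻ x, f x * g x ∂ν) ^ p ≤ (∫⁻ x, f x ∂ν) ^ (p - 1) * ∫⁻ x, f x * g x ^ p ∂ν := by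
  have hp₀ : 0 < p := one_pos.trans_le hp
  have hp' : p⁻¹ ≤ 1 := inv_le_one_of_one_le₀ hp
  have hsplit (x : α) : f x * g x = f x ^ (1 - p⁻¹) * (f x * g x ^ p) ^ p⁻¹ := by
    rw [ENNReal.mul_rpow_of_nonneg _ _ (by positivity), ENNReal.rpow_rpow_inv hp₀.ne', ← mul_assoc,
      ← ENNReal.rpow_add_of_nonneg _ _ (sub_nonneg.2 hp') (by positivity), sub_add_cancel,
      ENNReal.rpow_one]
  simp_rw [hsplit]
  calc (∫⁻ x, f x ^ (1 - p⁻¹) * (f x * g x ^ p) ^ p⁻¹ ∂ν) ^ p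
      ≤ ((∫⁻ x, f x ∂ν) ^ (1 - p⁻¹) * (∫⁻ x, f x * g x ^ p ∂ν) ^ p⁻¹) ^ p := by
        gcongr
        exact ENNReal.lintegral_mul_norm_pow_le hf (hf.mul (hg.pow_const p)) (sub_nonneg.2 hp')
          (by positivity) (sub_add_cancel _ _)
    _ = _ := by
        rw [ENNReal.mul_rpow_of_nonneg _ _ hp₀.le, ENNReal.rpow_inv_rpow hp₀.ne',
          ← ENNReal.rpow_mul, sub_mul, inv_mul_cancel₀ hp₀.ne', one_mul]

variable {G : Type*} [AddCommGroup G] [MeasurableSpace G] [MeasurableAdd₂ G] [MeasurableNeg G]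
  {ν : Measure G} [SFinite ν] [ν.IsAddLeftInvariant]

theorem lintegral_rpow_lintegral_mul_sub_le {f g : G → ℝ≥0∞} (hf : AEMeasurable f ν)
    (hg : AEMeasurable g ν) {p : ℝ} (hp : 1 ≤ p) :
    ∫⁻ x, (∫⁻ t, f t * g (x - t) ∂ν) ^ p ∂ν ≤ (∫⁻ t, f t ∂ν) ^ p * ∫⁻ x, g x ^ p ∂ν := by
  have hgx (x : G) : AEMeasurable (fun t ↦ g (x - t)) ν :=
    hg.comp_quasiMeasurePreserving (quasiMeasurePreserving_sub_left ν x)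
  have hgxt : AEMeasurable (fun z : G × G ↦ g (z.1 - z.2)) (ν.prod ν) :=
    hg.comp_quasiMeasurePreserving (quasiMeasurePreserving_sub_of_right_invariant ν ν)
  have hgt (t : G) : AEMeasurable (fun x ↦ g (x - t)) ν :=
    hg.comp_quasiMeasurePreserving (measurePreserving_sub_right ν t).quasiMeasurePreserving
  calc ∫⁻ x, (∫⁻ t, f t * g (x - t) ∂ν) ^ p ∂ν
      ≤ ∫⁻ x, (∫⁻ t, f t ∂ν) ^ (p - 1) * ∫⁻ t, f t * g (x - t) ^ p ∂ν ∂ν :=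
        lintegral_mono fun x ↦ rpow_lintegral_mul_le hf (hgx x) hp
    _ = (∫⁻ t, f t ∂ν) ^ (p - 1) * ∫⁻ x, ∫⁻ t, f t * g (x - t) ^ p ∂ν ∂ν :=
        lintegral_const_mul'' _ (hf.comp_snd.mul (hgxt.pow_const p)).lintegral_prod_right'
    _ = (∫⁻ t, f t ∂ν) ^ (p - 1) * ∫⁻ t, f t * ∫⁻ x, g x ^ p ∂ν ∂ν := by
        rw [lintegral_lintegral_swap (hf.comp_snd.mul (hgxt.pow_const p))]
        congr with t
        rw [lintegral_const_mul'' _ ((hgt t).pow_const p),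
          lintegral_sub_right_eq_self (fun x ↦ g x ^ p) t]
    _ = (∫⁻ t, f t ∂ν) ^ p * ∫⁻ x, g x ^ p ∂ν := by
        rw [lintegral_mul_const'' _ hf, ← mul_assoc]
        congr 1
        nth_rewrite 2 [← ENNReal.rpow_one (∫⁻ t, f t ∂ν)]
        rw [← ENNReal.rpow_add_of_nonneg _ _ (by linarith) one_pos.le, sub_add_cancel]

theorem memLp_convolution_of_integrable {f g : G → ℝ} {p : ℝ≥0∞} [Fact (1 ≤ p)] (hp_top : p ≠ ⊤)
    (hf : Integrable f ν) (hg : MemLp g p ν) :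
    MemLp (f ⋆[mul ℝ ℝ, ν] g) p ν := by
  have hp₀ : p ≠ 0 := (one_pos.trans_le Fact.out).ne'
  have hp₁ : 1 ≤ p.toReal := (ENNReal.dichotomy p).resolve_left hp_top
  refine ⟨(hf.1.convolution_integrand _ hg.1).integral_prod_right', ?_⟩
  rw [eLpNorm_lt_top_iff_lintegral_rpow_enorm_lt_top hp₀ hp_top]
  calc ∫⁻ x, ‖(f ⋆[mul ℝ ℝ, ν] g) x‖ₑ ^ p.toReal ∂ν
      ≤ ∫⁻ x, (∫⁻ t, ‖f t‖ₑ * ‖g (x - t)‖ₑ ∂ν) ^ p.toReal ∂ν := by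
        gcongr with x
        refine (enorm_integral_le_lintegral_enorm _).trans_eq ?_
        simp only [ContinuousLinearMap.mul_apply', enorm_mul]
    _ ≤ (∫⁻ t, ‖f t‖ₑ ∂ν) ^ p.toReal * ∫⁻ x, ‖g x‖ₑ ^ p.toReal ∂ν :=
        lintegral_rpow_lintegral_mul_sub_le hf.1.enorm hg.1.enorm hp₁
    _ < ⊤ := ENNReal.mul_lt_top (ENNReal.rpow_lt_top_of_nonneg (by positivity) hf.2.ne)
        (lintegral_rpow_enorm_lt_top_of_eLpNorm_lt_top hp₀ hp_top hg.2)

end Young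

section Convolution

variable {E : Type*} [NormedAddCommGroup E] [NormedSpace ℝ E] [MeasurableSpace E] [BorelSpace E]
  {ν : Measure E} [SFinite ν] [ν.IsAddLeftInvariant] {f φ : E → ℝ}

theorem fderiv_convolution_right_apply (hf : LocallyIntegrable f ν) (hφ : ContDiff ℝ 1 φ)
    (hφc : HasCompactSupport φ) (x v : E) :
    fderiv ℝ (f ⋆[mul ℝ ℝ, ν] φ) x v =
      (f ⋆[mul ℝ ℝ, ν] fun y ↦ fderiv ℝ φ y v) x := by
  have hderiv := hφc.hasFDerivAt_convolution_right (mul ℝ ℝ) hf hφ x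
  rw [hderiv.fderiv]
  exact convolution_precompR_apply _ hf (hφc.fderiv ℝ) (hφ.continuous_fderiv one_ne_zero) x v

end Convolution

section Uniqueness

variable {E : Type*} [NormedAddCommGroup E] [InnerProductSpace ℝ E] [FiniteDimensional ℝ E]
  [MeasurableSpace E] [BorelSpace E]

theorem laplacian_convolution_right {f φ : E → ℝ} (hf : LocallyIntegrable f)
    (hφ : ContDiff ℝ 2 φ) (hφc : HasCompactSupport φ) :
    Δ (f ⋆[mul ℝ ℝ] φ) = f ⋆[mul ℝ ℝ] Δ φ := by
  let b := stdOrthonormalBasis ℝ E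
  have hconv : ContDiff ℝ 2 (f ⋆[mul ℝ ℝ] φ) :=
    hφc.contDiff_convolution_right _ hf hφ
  have hpartial (i) : ContDiff ℝ 1 fun y ↦ fderiv ℝ φ y (b i) :=
    (hφ.fderiv_right (m := 1) le_rfl).clm_apply contDiff_const
  ext x
  rw [laplacian_eq_sum_fderiv_fderiv b hconv]
  simp_rw [fderiv_convolution_right_apply hf (hφ.of_le one_le_two) hφc,
    fderiv_convolution_right_apply hf (hpartial _) (hφc.fderiv_apply ℝ _), convolution_mul]
  rw [← integral_finsetSum]
  · simp_rw [laplacian_eq_sum_fderiv_fderiv b hφ, Finset.mul_sum]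
  · exact fun i _ ↦ ((hφc.fderiv_apply ℝ _).fderiv_apply ℝ _).convolutionExists_right
      (mul ℝ ℝ) hf
      (((hpartial i).continuous_fderiv one_ne_zero).clm_apply continuous_const) x

theorem convolution_laplacian_apply (f : E → ℝ) {φ : E → ℝ} (hφ : ContDiff ℝ 2 φ) (x : E) :
    (f ⋆[mul ℝ ℝ] Δ φ) x = ∫ t, f t * Δ (fun s ↦ φ (x - s)) t := by
  rw [convolution_mul]
  congr with t
  simpa [sub_eq_add_neg] using Or.inl (laplacian_comp_add_smul hφ x (-1) t).symm

theorem laplacian_convolution_right_eq {f g φ : E → ℝ} (hf : LocallyIntegrable f)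
    (hg : LocallyIntegrable g) (hφ : ContDiff ℝ ∞ φ) (hφc : HasCompactSupport φ)
    (h : ∀ χ : 𝓢(E, ℝ), HasCompactSupport χ → ∫ x, f x * Δ χ x = ∫ x, g x * Δ χ x) :
    Δ (f ⋆[mul ℝ ℝ] φ) = Δ (g ⋆[mul ℝ ℝ] φ) := by
  have hφ₂ : ContDiff ℝ 2 φ := contDiff_infty.1 hφ 2
  rw [laplacian_convolution_right hf hφ₂ hφc, laplacian_convolution_right hg hφ₂ hφc]
  ext x
  have hχ : ContDiff ℝ ∞ fun s ↦ φ (x - s) := by fun_prop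
  have hχc : HasCompactSupport fun s ↦ φ (x - s) :=
    hφc.comp_homeomorph (Homeomorph.subLeft x)
  rw [convolution_laplacian_apply _ hφ₂, convolution_laplacian_apply _ hφ₂]
  have hx := h (hχc.toSchwartzMap hχ) hχc
  simp only [SchwartzMap.laplacian_apply] at hx
  exact hx

theorem convolution_eq_of_forall_integral_mul_laplacian_eq [Nontrivial E] {p g φ : E → ℝ}
    (hp : Integrable p) (hg : MemLp g 2) (hφ : ContDiff ℝ ∞ φ) (hφc : HasCompactSupport φ)
    (h : ∀ χ : 𝓢(E, ℝ), HasCompactSupport χ → ∫ x, p x * Δ χ x = ∫ x, g x * Δ χ x) :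
    p ⋆[mul ℝ ℝ] φ = g ⋆[mul ℝ ℝ] φ := by
  have hgloc : LocallyIntegrable g := hg.locallyIntegrable one_le_two
  have hpφ : MemLp (p ⋆[mul ℝ ℝ] φ) 2 :=
    memLp_convolution_of_integrable ENNReal.ofNat_ne_top hp
      (hφ.continuous.memLp_of_hasCompactSupport hφc)
  have hgφ : MemLp (g ⋆[mul ℝ ℝ] φ) 2 := by
    rw [← convolution_flip, ContinuousLinearMap.flip_mul]
    exact memLp_convolution_of_integrable ENNReal.ofNat_ne_top
      (hφ.continuous.integrable_of_hasCompactSupport hφc) hg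
  have hp₂ : ContDiff ℝ 2 (p ⋆[mul ℝ ℝ] φ) :=
    hφc.contDiff_convolution_right _ hp.locallyIntegrable (contDiff_infty.1 hφ 2)
  have hg₂ : ContDiff ℝ 2 (g ⋆[mul ℝ ℝ] φ) :=
    hφc.contDiff_convolution_right _ hgloc (contDiff_infty.1 hφ 2)
  refine sub_eq_zero.1 (eq_zero_of_laplacian_eq_zero_of_memLp_two (hp₂.sub hg₂) ?_ (hpφ.sub hgφ))
  ext x
  rw [hp₂.contDiffAt.laplacian_sub hg₂.contDiffAt,
    laplacian_convolution_right_eq hp.locallyIntegrable hgloc hφ hφc h, sub_self, Pi.zero_apply]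

theorem ae_eq_of_forall_integral_mul_laplacian_eq [Nontrivial E] {p g : E → ℝ} (hp : Integrable p)
    (hg : MemLp g 2)
    (h : ∀ χ : 𝓢(E, ℝ), HasCompactSupport χ → ∫ x, p x * Δ χ x = ∫ x, g x * Δ χ x) :
    p =ᵐ[volume] g := by
  let φ (n : ℕ) : ContDiffBump (0 : E) :=
    ⟨1 / (n + 1), 2 / (n + 1), by positivity, by gcongr; exact one_lt_two⟩
  have hφ : Tendsto (fun n ↦ (φ n).rOut) atTop (𝓝 0) := by
    simpa [φ, div_eq_mul_inv] using (tendsto_one_div_add_atTop_nhds_zero_nat (𝕜 := ℝ)).const_mul 2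
  have hφK : ∀ᶠ n in atTop, (φ n).rOut ≤ 2 * (φ n).rIn := .of_forall fun n ↦
    (mul_one_div 2 ((n : ℝ) + 1)).ge
  filter_upwards [ContDiffBump.ae_convolution_tendsto_right_of_locallyIntegrable hφ hφK
      hp.locallyIntegrable, ContDiffBump.ae_convolution_tendsto_right_of_locallyIntegrable hφ hφK
      (hg.locallyIntegrable one_le_two)] with x hpx hgx
  have hcomm (w : E → ℝ) (n : ℕ) : ((φ n).normed volume ⋆[lsmul ℝ ℝ] w) x =
      (w ⋆[mul ℝ ℝ] (φ n).normed volume) x := by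
    simp only [convolution_lsmul, convolution_mul_swap, smul_eq_mul, mul_comm]
  refine tendsto_nhds_unique hpx (hgx.congr fun n ↦ ?_)
  rw [hcomm, hcomm, convolution_eq_of_forall_integral_mul_laplacian_eq hp hg
    (φ n).contDiff_normed (φ n).hasCompactSupport_normed h]

end Uniqueness

section Duality

theorem exists_forall_eq_inner_of_norm_le {V H : Type*} [AddCommGroup V] [Module ℝ V]
    [NormedAddCommGroup H] [InnerProductSpace ℝ H] [CompleteSpace H] (ℓ : V →ₗ[ℝ] ℝ)
    (T : V →ₗ[ℝ] H) {C : ℝ} (hC : ∀ v, ‖ℓ v‖ ≤ C * ‖T v‖) : ∃ y : H, ∀ v, ℓ v = ⟪y, T v⟫ := by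
  obtain ⟨L, hL, -⟩ := exists_extension_norm_eq (LinearMap.range T) (ℓ.compLeftInverse T)
  refine ⟨(InnerProductSpace.toDual ℝ H).symm L, fun v ↦ ?_⟩
  rw [InnerProductSpace.toDual_symm_apply, ← ℓ.compLeftInverse_apply_of_bdd T ⟨C, hC⟩ v _ rfl]
  exact (hL ⟨T v, v, rfl⟩).symm

variable {E : Type*} [NormedAddCommGroup E] [InnerProductSpace ℝ E] [FiniteDimensional ℝ E]
  [MeasurableSpace E] [BorelSpace E]

variable (E) in
/-- The space `C_c^∞(E)` of test functions, as the subspace of compactly supported functions of the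
Schwartz space; this makes the directional derivatives and the Laplacian linear operators on it. -/
def compactlySupportedSchwartz : Submodule ℝ 𝓢(E, ℝ) where
  carrier := {χ | HasCompactSupport χ}
  add_mem' := HasCompactSupport.add
  zero_mem' := HasCompactSupport.zero
  smul_mem' c _ hχ := HasCompactSupport.smul_left (f := fun _ ↦ c) hχ

theorem integrable_mul_schwartzMap {p : E → ℝ} (hp : Integrable p) (ψ : 𝓢(E, ℝ)) :
    Integrable fun x ↦ p x * ψ x :=
  hp.mul_of_top_left (ψ.memLp ⊤)

theorem exists_memLp_two_forall_integral_mul_laplacian_eq {p : E → ℝ} (hp : Integrable p) {K : ℝ}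
    (hK : ∀ χ : 𝓢(E, ℝ), HasCompactSupport χ →
      |∫ x, p x * Δ χ x| ≤ K * ‖(Δ χ).toLp 2‖) :
    ∃ g : E → ℝ, MemLp g 2 ∧
      ∀ χ : 𝓢(E, ℝ), HasCompactSupport χ → ∫ x, p x * Δ χ x = ∫ x, g x * Δ χ x := by
  let Δ₀ : compactlySupportedSchwartz E →ₗ[ℝ] 𝓢(E, ℝ) :=
    (LineDeriv.laplacianCLM ℝ E 𝓢(E, ℝ)).toLinearMap ∘ₗ (compactlySupportedSchwartz E).subtype
  let ℓ : compactlySupportedSchwartz E →ₗ[ℝ] ℝ :=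
    { toFun χ := ∫ x, p x * Δ₀ χ x
      map_add' χ ψ := by
        simp only [map_add, add_apply, mul_add]
        exact integral_add (integrable_mul_schwartzMap hp _) (integrable_mul_schwartzMap hp _)
      map_smul' c χ := by
        simp only [map_smul, smul_apply, smul_eq_mul, mul_left_comm,
          integral_const_mul, RingHom.id_apply] }
  let T : compactlySupportedSchwartz E →ₗ[ℝ] Lp ℝ 2 (volume : Measure E) :=
    (SchwartzMap.toLpCLM ℝ ℝ 2 volume).toLinearMap ∘ₗ Δ₀
  obtain ⟨g, hg⟩ := exists_forall_eq_inner_of_norm_le ℓ T fun χ ↦ hK χ χ.2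
  refine ⟨g, Lp.memLp g, fun χ hχ ↦ ?_⟩
  have hgχ : ∫ x, p x * Δ χ x = ⟪g, (Δ χ).toLp 2⟫ := hg ⟨χ, hχ⟩
  rw [hgχ, L2.inner_def]
  refine integral_congr_ae ?_
  filter_upwards [(Δ χ).coeFn_toLp 2] with x hx
  rw [hx, real_inner_comm]
  rfl

theorem memLp_two_of_abs_integral_mul_laplacian_le [Nontrivial E] {p : E → ℝ} (hp : Integrable p)
    {K : ℝ} (hK : ∀ χ : 𝓢(E, ℝ), HasCompactSupport χ →
      |∫ x, p x * Δ χ x| ≤ K * ‖(Δ χ).toLp 2‖) : MemLp p 2 := by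
  obtain ⟨g, hg, hpg⟩ := exists_memLp_two_forall_integral_mul_laplacian_eq hp hK
  exact hg.ae_eq (ae_eq_of_forall_integral_mul_laplacian_eq hp hg hpg).symm

end Duality

section Hessian

variable {E : Type*} [NormedAddCommGroup E]

theorem lineDerivOp_comm [NormedSpace ℝ E] (χ : 𝓢(E, ℝ)) (v w : E) :
    ∂_{v} (∂_{w} χ) = ∂_{w} (∂_{v} χ) := by
  have hχ : Differentiable ℝ (fderiv ℝ χ) :=
    differentiable_fderiv_of_contDiff_two (χ.smooth 2)
  ext x
  change fderiv ℝ (fun y ↦ fderiv ℝ χ y w) x v = fderiv ℝ (fun y ↦ fderiv ℝ χ y v) x w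
  rw [fderiv_clm_apply (hχ x) (by fun_prop), fderiv_clm_apply (hχ x) (by fun_prop)]
  simpa using (χ.smooth 2).contDiffAt.isSymmSndFDerivAt (by simp) v w

theorem sq_norm_toLp_two [NormedSpace ℝ E] [FiniteDimensional ℝ E] [MeasurableSpace E]
    [BorelSpace E] {ν : Measure E} [ν.HasTemperateGrowth] {F : Type*} [NormedAddCommGroup F]
    [NormedSpace ℝ F] (f : 𝓢(E, F)) : ‖f.toLp 2 ν‖ ^ 2 = ∫ x, ‖f x‖ ^ 2 ∂ν := by
  have hnn : 0 ≤ ∫ x, ‖f x‖ ^ 2 ∂ν := integral_nonneg fun x ↦ by positivity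
  rw [SchwartzMap.norm_toLp,
    (f.memLp 2 ν).eLpNorm_eq_integral_rpow_norm two_ne_zero ENNReal.ofNat_ne_top]
  simp only [ENNReal.toReal_ofNat, Real.rpow_two]
  rw [ENNReal.toReal_ofReal (by positivity), ← Real.rpow_natCast, ← Real.rpow_mul hnn]
  simp

theorem abs_integral_mul_schwartzMap_le [NormedSpace ℝ E] [MeasurableSpace E] [BorelSpace E]
    {ν : Measure E} [ν.HasTemperateGrowth] {r s : ℝ≥0∞} [r.HolderConjugate s] {f : E → ℝ}
    (hf : MemLp f r ν) (ψ : 𝓢(E, ℝ)) :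
    |∫ x, f x * ψ x ∂ν| ≤ (eLpNorm f r ν).toReal * ‖ψ.toLp s ν‖ := by
  rw [SchwartzMap.norm_toLp, ← ENNReal.toReal_mul, ← Real.norm_eq_abs, ← toReal_enorm]
  refine ENNReal.toReal_mono (ENNReal.mul_ne_top hf.2.ne (ψ.memLp s ν).2.ne) ?_
  calc ‖∫ x, f x * ψ x ∂ν‖ₑ ≤ ∫⁻ x, ‖f x * ψ x‖ₑ ∂ν := enorm_integral_le_lintegral_enorm _
    _ = eLpNorm (f • ⇑ψ) 1 ν := by rw [eLpNorm_one_eq_lintegral_enorm]; rfl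
    _ ≤ eLpNorm f r ν * eLpNorm ψ s ν := eLpNorm_smul_le_mul_eLpNorm (ψ.memLp s ν).1 hf.1

variable [InnerProductSpace ℝ E] [FiniteDimensional ℝ E] [MeasurableSpace E] [BorelSpace E]
  {ι : Type*} [Fintype ι] (b : OrthonormalBasis ι ℝ E) (χ : 𝓢(E, ℝ))

theorem integral_lineDerivOp_lineDerivOp_sq (v w : E) :
    ∫ x, (∂_{v} (∂_{w} χ) x) ^ 2 = ∫ x, ∂_{v} (∂_{v} χ) x * ∂_{w} (∂_{w} χ) x := by
  simp_rw [sq]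
  calc ∫ x, ∂_{v} (∂_{w} χ) x * ∂_{v} (∂_{w} χ) x
      = -∫ x, ∂_{v} (∂_{v} (∂_{w} χ)) x * ∂_{w} χ x :=
        SchwartzMap.integral_mul_lineDerivOp_right_eq_neg_left _ _ v
    _ = -∫ x, ∂_{w} (∂_{v} (∂_{v} χ)) x * ∂_{w} χ x := by
        rw [lineDerivOp_comm χ v w, lineDerivOp_comm (∂_{v} χ) v w]
    _ = ∫ x, ∂_{v} (∂_{v} χ) x * ∂_{w} (∂_{w} χ) x :=
        (SchwartzMap.integral_mul_lineDerivOp_right_eq_neg_left _ _ w).symm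

theorem integral_laplacian_sq :
    ∫ x, (Δ χ x) ^ 2 = ∑ i, ∑ j, ∫ x, (∂_{b i} (∂_{b j} χ) x) ^ 2 := by
  have hint (f g : 𝓢(E, ℝ)) : Integrable fun x ↦ f x * g x :=
    integrable_mul_schwartzMap f.integrable g
  simp_rw [integral_lineDerivOp_lineDerivOp_sq, SchwartzMap.laplacian_eq_sum b, sum_apply,
    sq, Finset.sum_mul_sum]
  rw [integral_finsetSum _ fun i _ ↦ integrable_finsetSum _ fun j _ ↦ hint _ _]
  exact Finset.sum_congr rfl fun i _ ↦ integral_finsetSum _ fun j _ ↦ hint _ _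

theorem sum_integral_lineDerivOp_sq_le (j : ι) :
    ∑ i, ∫ x, (∂_{b i} (∂_{b j} χ) x) ^ 2 ≤ ∫ x, (Δ χ x) ^ 2 := by
  rw [integral_laplacian_sq b, Finset.sum_comm]
  exact Finset.single_le_sum (f := fun j ↦ ∑ i, ∫ x, (∂_{b i} (∂_{b j} χ) x) ^ 2)
    (fun j _ ↦ Finset.sum_nonneg fun i _ ↦ integral_nonneg fun x ↦ sq_nonneg _)
    (Finset.mem_univ j)

theorem norm_toLp_lineDerivOp_lineDerivOp_le (i j : ι) :
    ‖(∂_{b i} (∂_{b j} χ)).toLp 2‖ ≤ ‖(Δ χ).toLp 2‖ := by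
  refine le_of_sq_le_sq ?_ (norm_nonneg _)
  simp_rw [sq_norm_toLp_two, Real.norm_eq_abs, sq_abs]
  refine le_trans ?_ (sum_integral_lineDerivOp_sq_le b χ j)
  exact Finset.single_le_sum (f := fun i ↦ ∫ x, (∂_{b i} (∂_{b j} χ) x) ^ 2)
    (fun i _ ↦ integral_nonneg fun x ↦ sq_nonneg _) (Finset.mem_univ i)

theorem norm_toLp_fderivCLM_lineDerivOp_le (j : ι) :
    ‖(SchwartzMap.fderivCLM ℝ E ℝ (∂_{b j} χ)).toLp 2‖ ≤ ‖(Δ χ).toLp 2‖ := by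
  have hint (i : ι) : Integrable fun x ↦ (∂_{b i} (∂_{b j} χ) x) ^ 2 := by
    simpa only [sq] using integrable_mul_schwartzMap (∂_{b i} (∂_{b j} χ)).integrable _
  refine le_of_sq_le_sq ?_ (norm_nonneg _)
  simp_rw [sq_norm_toLp_two, SchwartzMap.fderivCLM_apply, norm_sq_eq_sum_apply_sq b,
    Real.norm_eq_abs, sq_abs]
  refine le_of_eq_of_le (integral_finsetSum _ fun i _ ↦ hint i) ?_
  exact sum_integral_lineDerivOp_sq_le b χ j

theorem exists_forall_norm_toLp_le_mul_norm_toLp_fderivCLM [Nontrivial E] {s : ℝ≥0}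
    (hs : (s : ℝ)⁻¹ = 2⁻¹ - (Module.finrank ℝ E : ℝ)⁻¹) :
    ∃ C : ℝ≥0, ∀ ψ : 𝓢(E, ℝ), HasCompactSupport ψ →
      ‖ψ.toLp s‖ ≤ C * ‖(SchwartzMap.fderivCLM ℝ E ℝ ψ).toLp 2‖ := by
  refine ⟨eLpNormLESNormFDerivOfEqInnerConst (volume : Measure E) (2 : ℝ≥0), fun ψ hψ ↦ ?_⟩
  have hcoe : ⇑(SchwartzMap.fderivCLM ℝ E ℝ ψ) = fderiv ℝ ψ :=
    funext fun x ↦ SchwartzMap.fderivCLM_apply ℝ ψ x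
  have hsobolev := eLpNorm_le_eLpNorm_fderiv_of_eq_inner volume (ψ.smooth 1) hψ
    (p := 2) (p' := s) one_le_two Module.finrank_pos (by simpa using hs)
  rw [ENNReal.coe_ofNat, ← hcoe] at hsobolev
  rw [SchwartzMap.norm_toLp, SchwartzMap.norm_toLp, ← ENNReal.coe_toReal, ← ENNReal.toReal_mul]
  refine ENNReal.toReal_mono (ENNReal.mul_ne_top ENNReal.coe_ne_top ?_) hsobolev
  exact (SchwartzMap.memLp _ 2 volume).2.ne

theorem exists_forall_norm_toLp_lineDerivOp_le [Nontrivial E] {s : ℝ≥0}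
    (hs : (s : ℝ)⁻¹ = 2⁻¹ - (Module.finrank ℝ E : ℝ)⁻¹) :
    ∃ C : ℝ≥0, ∀ χ : 𝓢(E, ℝ), HasCompactSupport χ →
      ∀ j, ‖(∂_{b j} χ).toLp s‖ ≤ C * ‖(Δ χ).toLp 2‖ := by
  obtain ⟨C, hC⟩ := exists_forall_norm_toLp_le_mul_norm_toLp_fderivCLM (E := E) hs
  refine ⟨C, fun χ hχ j ↦ ?_⟩
  have hsupp : HasCompactSupport (∂_{b j} χ : 𝓢(E, ℝ)) := hχ.fderiv_apply ℝ (b j)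
  refine (hC _ hsupp).trans ?_
  gcongr
  exact norm_toLp_fderivCLM_lineDerivOp_le b χ j

theorem memLp_two_of_integral_mul_laplacian_eq [Nontrivial E] {r s : ℝ≥0}
    [ENNReal.HolderConjugate r s] (hs : (s : ℝ)⁻¹ = 2⁻¹ - (Module.finrank ℝ E : ℝ)⁻¹)
    {p : E → ℝ} (hp : Integrable p) {A : ι → ι → E → ℝ} (hA : ∀ i j, MemLp (A i j) 2)
    {f : ι → E → ℝ} (hf : ∀ i, MemLp (f i) r)
    (h : ∀ χ : 𝓢(E, ℝ), HasCompactSupport χ →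
      ∫ x, p x * Δ χ x =
        ∑ i, ∑ j, (∫ x, A i j x * ∂_{b j} (∂_{b i} χ) x) + ∑ i, ∫ x, f i x * ∂_{b i} χ x) :
    MemLp p 2 := by
  obtain ⟨C, hC⟩ := exists_forall_norm_toLp_lineDerivOp_le b hs
  let a (i j : ι) : ℝ := (eLpNorm (A i j) 2 volume).toReal
  let c (i : ι) : ℝ := (eLpNorm (f i) r volume).toReal
  refine memLp_two_of_abs_integral_mul_laplacian_le (K := ∑ i, ∑ j, a i j + ∑ i, c i * C) hp
    fun χ hχ ↦ ?_
  have hstress (i j : ι) : |∫ x, A i j x * ∂_{b j} (∂_{b i} χ) x| ≤ a i j * ‖(Δ χ).toLp 2‖ :=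
    (abs_integral_mul_schwartzMap_le (hA i j) _).trans <| mul_le_mul_of_nonneg_left
      (norm_toLp_lineDerivOp_lineDerivOp_le b χ j i) ENNReal.toReal_nonneg
  have hforce (i : ι) : |∫ x, f i x * ∂_{b i} χ x| ≤ c i * C * ‖(Δ χ).toLp 2‖ := by
    rw [mul_assoc]
    exact (abs_integral_mul_schwartzMap_le (hf i) _).trans <| mul_le_mul_of_nonneg_left
      (hC χ hχ i) ENNReal.toReal_nonneg
  rw [h χ hχ, add_mul, Finset.sum_mul, Finset.sum_mul]
  simp_rw [Finset.sum_mul]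
  refine (abs_add_le _ _).trans (add_le_add ?_ ?_)
  · exact (Finset.abs_sum_le_sum_abs _ _).trans <| Finset.sum_le_sum fun i _ ↦
      (Finset.abs_sum_le_sum_abs _ _).trans <| Finset.sum_le_sum fun j _ ↦ hstress i j
  · exact (Finset.abs_sum_le_sum_abs _ _).trans <| Finset.sum_le_sum fun i _ ↦ hforce i

end Hessian

section LpSpaces

variable {α : Type*} [MeasurableSpace α] {ν : Measure α}

theorem memLp_of_exponent_le_of_exponent_ge {F : Type*} [NormedAddCommGroup F] {f : α → F}
    {p q r : ℝ≥0∞} (hp : p ≠ 0) (hpq : p ≤ q) (hqr : q ≤ r) (hr : r ≠ ⊤) (hfp : MemLp f p ν)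
    (hfr : MemLp f r ν) : MemLp f q ν := by
  have hq : q ≠ ⊤ := ne_top_of_le_ne_top hr hqr
  have hpq' : p.toReal ≤ q.toReal := ENNReal.toReal_mono hq hpq
  have hqr' : q.toReal ≤ r.toReal := ENNReal.toReal_mono hr hqr
  rw [← integrable_norm_rpow_iff hfp.1 (ne_bot_of_le_ne_bot hp hpq) hq]
  have hr₀ : r ≠ 0 := ne_bot_of_le_ne_bot hp (hpq.trans hqr)
  refine ((hfp.integrable_norm_rpow hp (ne_top_of_le_ne_top hq hpq)).add
    (hfr.integrable_norm_rpow hr₀ hr)).mono'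
    (hfp.1.norm.aemeasurable.pow_const _).aestronglyMeasurable (.of_forall fun x ↦ ?_)
  have hnonneg (t : ℝ) : 0 ≤ ‖f x‖ ^ t := Real.rpow_nonneg (norm_nonneg _) t
  rw [Real.norm_of_nonneg (hnonneg _), Pi.add_apply]
  rcases le_total ‖f x‖ 1 with hle | hge
  · exact le_add_of_le_of_nonneg (Real.rpow_le_rpow_of_exponent_ge' (norm_nonneg _) hle
      ENNReal.toReal_nonneg hpq') (hnonneg _)
  · exact le_add_of_nonneg_of_le (hnonneg _) (Real.rpow_le_rpow_of_exponent_le hge hqr')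

theorem memLp_rpow_iff_of_nonneg {ρ : α → ℝ} (hρ : AEMeasurable ρ ν) (hρ₀ : 0 ≤ᵐ[ν] ρ) {γ : ℝ}
    (hγ : 0 < γ) (q : ℝ≥0∞) :
    MemLp (fun x ↦ ρ x ^ γ) q ν ↔ MemLp ρ (q * ENNReal.ofReal γ) ν := by
  have hγ' : ENNReal.ofReal γ ≠ 0 := (ENNReal.ofReal_pos.2 hγ).ne'
  rw [← memLp_norm_rpow_iff hρ.aestronglyMeasurable hγ' ENNReal.ofReal_ne_top,
    ENNReal.mul_div_cancel_right hγ' ENNReal.ofReal_ne_top, ENNReal.toReal_ofReal hγ.le]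
  refine memLp_congr_ae ?_
  filter_upwards [hρ₀] with x hx
  rw [Real.norm_of_nonneg hx]

theorem memLp_two_mul_mul_of_six_le {γ : ℝ≥0∞} (hγ : 6 ≤ γ) {ρ v w : α → ℝ} (hρ : MemLp ρ γ ν)
    (hv : MemLp v 6 ν) (hw : MemLp w 6 ν) (hint : Integrable (fun x ↦ ρ x * v x * w x) ν) :
    MemLp (fun x ↦ ρ x * v x * w x) 2 ν := by
  have hγv := ENNReal.HolderTriple.of γ 6
  have hγvw := ENNReal.HolderTriple.of (γ⁻¹ + 6⁻¹)⁻¹ 6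
  have hexp : ((γ⁻¹ + 6⁻¹)⁻¹⁻¹ + 6⁻¹ : ℝ≥0∞) ≤ 2⁻¹ := by
    rw [inv_inv]
    calc γ⁻¹ + 6⁻¹ + 6⁻¹ ≤ (6⁻¹ + 6⁻¹ + 6⁻¹ : ℝ≥0∞) := by gcongr
      _ = 2⁻¹ := by
        rw [← ENNReal.toReal_eq_toReal_iff' (by simp) (by simp)]
        norm_num [ENNReal.toReal_add]
  refine memLp_of_exponent_le_of_exponent_ge one_ne_zero one_le_two
    (ENNReal.le_inv_iff_le_inv.1 hexp) ?_ (memLp_one_iff_integrable.2 hint) ?_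
  · simp
  · exact MemLp.mul' hw (MemLp.mul' hv hρ (r := (γ⁻¹ + 6⁻¹)⁻¹))

theorem memLp_mul_six_fifths {γ : ℝ} (hγ : 6 / 5 < γ) {ρ : α → ℝ} {ι : Type*}
    [Fintype ι] {g : α → ι → ℝ} (hρ : MemLp ρ (ENNReal.ofReal γ) ν)
    (hg : MemLp g (ENNReal.ofReal (6 * γ / (5 * γ - 6))) ν) :
    MemLp (fun x i ↦ ρ x * g x i) (6 / 5 : ℝ≥0) ν := by
  have hγ₀ : 0 < γ := by linarith
  have hγ₁ : 0 < 5 * γ - 6 := by linarith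
  have : ENNReal.HolderTriple (ENNReal.ofReal γ) (ENNReal.ofReal (6 * γ / (5 * γ - 6)))
      (ENNReal.ofReal (6 / 5)) := ⟨by
    rw [← ENNReal.ofReal_inv_of_pos hγ₀, ← ENNReal.ofReal_inv_of_pos (by positivity),
      ← ENNReal.ofReal_inv_of_pos (by norm_num),
      ← ENNReal.ofReal_add (by positivity) (by positivity)]
    congr 1
    field_simp
    ring⟩
  have hexp : ((6 / 5 : ℝ≥0) : ℝ≥0∞) = ENNReal.ofReal (6 / 5) := by
    rw [ENNReal.ofReal, Real.toNNReal_div (by norm_num)]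
    norm_num
  rw [hexp]
  exact .of_eval fun i ↦ (hg.eval i).mul' hρ

end LpSpaces

section Pressure

variable {χ : 𝓢(E3, ℝ)}

theorem pd_apply_eq_lineDerivOp (i : Fin 3) (x : E3) :
    pd χ i x = ∂_{EuclideanSpace.basisFun (Fin 3) ℝ i} χ x := by
  rw [EuclideanSpace.basisFun_apply]
  rfl

theorem tgrad_pd_apply (x : E3) (i j : Fin 3) :
    tgrad (fun x i ↦ pd χ i x) x i j =
      ∂_{EuclideanSpace.basisFun (Fin 3) ℝ j} (∂_{EuclideanSpace.basisFun (Fin 3) ℝ i} χ) x := by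
  simp only [EuclideanSpace.basisFun_apply]
  rfl

theorem isTestVec_pd (hχ : HasCompactSupport χ) : IsTestVec 1 univ fun x i ↦ pd χ i x := by
  refine ⟨contDiff_pi.2 fun i ↦ (∂_{EuclideanSpace.single i (1 : ℝ)} χ).smooth 1, ?_,
    subset_univ _⟩
  refine (hχ.fderiv ℝ).mono fun x hx h ↦ hx (funext fun i ↦ ?_)
  simp [pd, h]

/-- The equation `div M + ∇p - div σ = f` on `ℝ³` in the sense of distributions, for a momentum flux
`M`, a pressure `p`, a stress `σ` and a force `f`. -/
def MomentumBalance (M : E3 → Fin 3 → Fin 3 → ℝ) (p : E3 → ℝ) (σ : E3 → Fin 3 → Fin 3 → ℝ)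
    (f : E3 → Fin 3 → ℝ) : Prop :=
  ∀ φ : E3 → Fin 3 → ℝ, IsTestVec 1 univ φ →
    ∫ x, ((∑ i, ∑ j, M x i j * tgrad φ x i j) + p x * ∑ i, tgrad φ x i i) =
      (∫ x, ∑ i, ∑ j, σ x i j * tgrad φ x i j) - ∫ x, ∑ i, f x i * φ x i

variable {p : E3 → ℝ} {M σ : E3 → Fin 3 → Fin 3 → ℝ} {f : E3 → Fin 3 → ℝ}

theorem integrable_sum_sum_mul_schwartzMap (hM : MemLp M 2) (ψ : Fin 3 → Fin 3 → 𝓢(E3, ℝ)) :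
    Integrable fun x ↦ ∑ i, ∑ j, M x i j * ψ i j x :=
  integrable_finsetSum _ fun i _ ↦ integrable_finsetSum _ fun j _ ↦
    ((hM.eval i).eval j).integrable_mul ((ψ i j).memLp 2)

theorem integral_sum_sum_mul_schwartzMap (hM : MemLp M 2) (ψ : Fin 3 → Fin 3 → 𝓢(E3, ℝ)) :
    ∫ x, ∑ i, ∑ j, M x i j * ψ i j x = ∑ i, ∑ j, ∫ x, M x i j * ψ i j x := by
  have hint (i j : Fin 3) : Integrable fun x ↦ M x i j * ψ i j x :=
    ((hM.eval i).eval j).integrable_mul ((ψ i j).memLp 2)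
  rw [integral_finsetSum _ fun i _ ↦ integrable_finsetSum _ fun j _ ↦ hint i j]
  exact Finset.sum_congr rfl fun i _ ↦ integral_finsetSum _ fun j _ ↦ hint i j

theorem holderConjugate_six_fifths_six : ENNReal.HolderConjugate (6 / 5 : ℝ≥0) (6 : ℝ≥0) := by
  have : NNReal.HolderConjugate (6 / 5) 6 := ⟨by norm_num, by norm_num, by norm_num⟩
  exact this.coe_ennreal

theorem integral_mul_laplacian_eq_of_momentumBalance (hp : Integrable p) (hM : MemLp M 2)
    (hσ : MemLp σ 2) (hf : MemLp f (6 / 5 : ℝ≥0))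
    (hmomentum : MomentumBalance M p σ f) (hχ : HasCompactSupport χ) :
    let b := EuclideanSpace.basisFun (Fin 3) ℝ
    ∫ x, p x * Δ χ x = ∑ i, ∑ j, (∫ x, (σ - M) x i j * ∂_{b j} (∂_{b i} χ) x) +
      ∑ i, ∫ x, (-f) x i * ∂_{b i} χ x := by
  intro b
  let H (i j : Fin 3) : 𝓢(E3, ℝ) := ∂_{b j} (∂_{b i} χ)
  have hΔ (x : E3) : Δ χ x = ∑ i, H i i x := by
    rw [SchwartzMap.laplacian_eq_sum b, sum_apply]
  have hforce (i : Fin 3) : Integrable fun x ↦ f x i * ∂_{b i} χ x :=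
    have := holderConjugate_six_fifths_six
    (hf.eval i).integrable_mul ((∂_{b i} χ).memLp (6 : ℝ≥0))
  have hbalance : ∫ x, ((∑ i, ∑ j, M x i j * H i j x) + p x * Δ χ x) =
      (∫ x, ∑ i, ∑ j, σ x i j * H i j x) - ∫ x, ∑ i, f x i * ∂_{b i} χ x := by
    have := hmomentum _ (isTestVec_pd hχ)
    simp_rw [tgrad_pd_apply, pd_apply_eq_lineDerivOp] at this
    simpa only [hΔ] using this
  rw [integral_add (integrable_sum_sum_mul_schwartzMap hM H) (integrable_mul_schwartzMap hp _),
    integral_finsetSum _ fun i _ ↦ hforce i] at hbalance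
  have hstress : ∑ i, ∑ j, ∫ x, (σ - M) x i j * H i j x =
      (∫ x, ∑ i, ∑ j, σ x i j * H i j x) - ∫ x, ∑ i, ∑ j, M x i j * H i j x := by
    rw [← integral_sum_sum_mul_schwartzMap (hσ.sub hM), ← integral_sub
      (integrable_sum_sum_mul_schwartzMap hσ H) (integrable_sum_sum_mul_schwartzMap hM H)]
    simp_rw [Pi.sub_apply, sub_mul, Finset.sum_sub_distrib]
  simp_rw [Pi.neg_apply, neg_mul, integral_neg, Finset.sum_neg_distrib]
  linarith

theorem memLp_two_of_momentumBalance (hp : Integrable p) (hM : MemLp M 2) (hσ : MemLp σ 2)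
    (hf : MemLp f (6 / 5 : ℝ≥0)) (hmomentum : MomentumBalance M p σ f) : MemLp p 2 :=
  have := holderConjugate_six_fifths_six
  memLp_two_of_integral_mul_laplacian_eq (EuclideanSpace.basisFun (Fin 3) ℝ) (s := 6)
    (by norm_num [finrank_euclideanSpace]) hp (fun i j ↦ ((hσ.sub hM).eval i).eval j)
    (fun i ↦ hf.neg.eval i)
    fun _ hχ ↦ integral_mul_laplacian_eq_of_momentumBalance hp hM hσ hf hmomentum hχ

end Pressure

section FiniteEnergy

variable {α : Type*} [MeasurableSpace α] {ν : Measure α} {ι : Type*} [Fintype ι] {γ : ℝ}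
  {ρ : α → ℝ} {u : α → ι → ℝ}

theorem integrable_rpow_of_integrable_energy (hγ : 1 < γ) (hρ : AEMeasurable ρ ν)
    (hρ₀ : 0 ≤ᵐ[ν] ρ)
    (henergy : Integrable
      (fun x ↦ (1 / 2) * ρ x * (∑ i, (u x i) ^ 2) + ρ x ^ γ / (γ - 1)) ν) :
    Integrable (fun x ↦ ρ x ^ γ) ν := by
  have hγ' : 0 < γ - 1 := sub_pos.2 hγ
  refine (henergy.const_mul (γ - 1)).mono' (hρ.pow_const γ).aestronglyMeasurable ?_
  filter_upwards [hρ₀] with x (hx : 0 ≤ ρ x)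
  have hkinetic : 0 ≤ (γ - 1) * (1 / 2 * ρ x * ∑ i, u x i ^ 2) := by positivity
  rw [Real.norm_of_nonneg (Real.rpow_nonneg hx γ), mul_add, mul_div_cancel₀ _ hγ'.ne']
  exact le_add_of_nonneg_left hkinetic

theorem memLp_of_integrable_energy (hγ : 1 < γ) (hρ : AEMeasurable ρ ν) (hρ₀ : 0 ≤ᵐ[ν] ρ)
    (henergy : Integrable
      (fun x ↦ (1 / 2) * ρ x * (∑ i, (u x i) ^ 2) + ρ x ^ γ / (γ - 1)) ν) :
    MemLp ρ (ENNReal.ofReal γ) ν := by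
  rw [← one_mul (ENNReal.ofReal γ), ← memLp_rpow_iff_of_nonneg hρ hρ₀ (one_pos.trans hγ),
    memLp_one_iff_integrable]
  exact integrable_rpow_of_integrable_energy hγ hρ hρ₀ henergy

theorem integrable_mul_mul_of_integrable_energy (hγ : 1 < γ) (hρ : AEMeasurable ρ ν)
    (hρ₀ : 0 ≤ᵐ[ν] ρ) (hu : AEMeasurable u ν)
    (henergy : Integrable
      (fun x ↦ (1 / 2) * ρ x * (∑ i, (u x i) ^ 2) + ρ x ^ γ / (γ - 1)) ν) (i j : ι) :
    Integrable (fun x ↦ ρ x * u x i * u x j) ν := by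
  have hui (i : ι) : AEMeasurable (fun x ↦ u x i) ν := hu.eval i
  refine (henergy.const_mul 2).mono' ((hρ.mul (hui i)).mul (hui j)).aestronglyMeasurable ?_
  filter_upwards [hρ₀] with x (hx : 0 ≤ ρ x)
  have : 0 < γ - 1 := sub_pos.2 hγ
  have hpotential : 0 ≤ ρ x ^ γ / (γ - 1) := by positivity
  have hle_sum (k : ι) : u x k ^ 2 ≤ ∑ i, u x i ^ 2 :=
    Finset.single_le_sum (f := fun k ↦ u x k ^ 2) (fun _ _ ↦ sq_nonneg _) (Finset.mem_univ k)
  have hprod : |u x i * u x j| ≤ ∑ i, u x i ^ 2 := by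
    rw [abs_mul]
    nlinarith [two_mul_le_add_sq |u x i| |u x j|, sq_abs (u x i), sq_abs (u x j), hle_sum i,
      hle_sum j]
  calc ‖ρ x * u x i * u x j‖ = ρ x * |u x i * u x j| := by
        rw [mul_assoc, norm_mul, Real.norm_of_nonneg hx, Real.norm_eq_abs]
    _ ≤ ρ x * ∑ i, u x i ^ 2 := mul_le_mul_of_nonneg_left hprod hx
    _ ≤ 2 * (1 / 2 * ρ x * ∑ i, u x i ^ 2 + ρ x ^ γ / (γ - 1)) := by linarith

end FiniteEnergy

section WeakSolution

theorem memLp_Smat {μ η : ℝ} {du : E3 → Fin 3 → Fin 3 → ℝ} (hdu : MemLp du 2) :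
    MemLp (fun x ↦ Smat μ η (du x)) 2 := by
  refine .of_eval fun i ↦ .of_eval fun j ↦ ?_
  have hentry (i j : Fin 3) : MemLp (fun x ↦ du x i j) 2 := (hdu.eval i).eval j
  have htrace : MemLp (fun x ↦ ∑ k, du x k k) 2 := memLp_finsetSum _ fun k _ ↦ hentry k k
  exact ((((hentry i j).add (hentry j i)).sub ((htrace.const_mul (2 / 3)).mul_const _)).const_mul
    μ).add ((htrace.const_mul η).mul_const _)

theorem memLp_six_of_memD012 {u : E3 → Fin 3 → ℝ} {du : E3 → Fin 3 → Fin 3 → ℝ}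
    (hu : MemD012 univ u du) : MemLp u 6 := by
  obtain ⟨hloc, -, -, un, hun, -, htendsto⟩ := hu
  rw [Measure.restrict_univ] at htendsto
  obtain ⟨n, hn⟩ := (htendsto.eventually_lt_const one_pos).exists
  have hun6 : MemLp (un n) 6 := (hun n).1.continuous.memLp_of_hasCompactSupport (hun n).2.1
  have hdiff : MemLp (fun x ↦ un n x - u x) 6 :=
    ⟨hun6.1.sub (locallyIntegrableOn_univ.1 hloc).aestronglyMeasurable, hn.trans ENNReal.one_lt_top⟩
  have heq : un n - (fun x ↦ un n x - u x) = u := sub_sub_cancel (un n) u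
  exact heq ▸ hun6.sub hdiff

theorem memLp_Smat_of_memD012 {μ η : ℝ} {u : E3 → Fin 3 → ℝ} {du : E3 → Fin 3 → Fin 3 → ℝ}
    (hu : MemD012 univ u du) : MemLp (fun x ↦ Smat μ η (du x)) 2 :=
  memLp_Smat (by simpa only [Measure.restrict_univ] using hu.2.2.1)

namespace IsentropicWeakSolution

variable {μ η γ : ℝ} {G : E3 → ℝ} {dG : E3 → Fin 3 → ℝ} {ρ : E3 → ℝ} {u : E3 → Fin 3 → ℝ}
  {du : E3 → Fin 3 → Fin 3 → ℝ}

theorem ae_nonneg (hsol : IsentropicWeakSolution μ η γ G dG ρ u du) : 0 ≤ᵐ[volume] ρ := by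
  have hρ₀ := hsol.ρ_nonneg
  rwa [Measure.restrict_univ] at hρ₀

theorem momentumBalance (hsol : IsentropicWeakSolution μ η γ G dG ρ u du) :
    MomentumBalance (fun x i j ↦ ρ x * u x i * u x j) (fun x ↦ ρ x ^ γ)
      (fun x ↦ Smat μ η (du x)) fun x i ↦ ρ x * dG x i := fun φ hφ ↦ by
  simpa only [Measure.restrict_univ] using hsol.momentum φ hφ

theorem memLp_force (hsol : IsentropicWeakSolution μ η γ G dG ρ u du) (hγ : 6 / 5 < γ)
    (hG : MemD01q univ G dG (6 * γ / (5 * γ - 6)))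
    (henergy : Integrable
      (fun x ↦ (1 / 2) * ρ x * (∑ i, (u x i) ^ 2) + ρ x ^ γ / (γ - 1))) :
    MemLp (fun x i ↦ ρ x * dG x i) (6 / 5 : ℝ≥0) :=
  memLp_mul_six_fifths hγ
    (memLp_of_integrable_energy (by linarith) hsol.aemeas_ρ hsol.ae_nonneg henergy)
    (by simpa only [Measure.restrict_univ] using hG.2.1)

end IsentropicWeakSolution

end WeakSolution

theorem higher_integrability_finite_energy_general {γ : ℝ} (hγ : 6 ≤ γ) {ρ : E3 → ℝ}
    (hρ : AEMeasurable ρ) (hρ₀ : 0 ≤ᵐ[volume] ρ) {u : E3 → Fin 3 → ℝ} (hu : MemLp u 6)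
    {σ : E3 → Fin 3 → Fin 3 → ℝ} (hσ : MemLp σ 2) {f : E3 → Fin 3 → ℝ}
    (hf : MemLp f (6 / 5 : ℝ≥0))
    (hmomentum : MomentumBalance (fun x i j ↦ ρ x * u x i * u x j) (fun x ↦ ρ x ^ γ) σ f)
    (henergy : Integrable
      (fun x ↦ (1 / 2) * ρ x * (∑ i, (u x i) ^ 2) + ρ x ^ γ / (γ - 1))) :
    MemLp ρ (ENNReal.ofReal (2 * γ)) := by
  have hγ₀ : 0 < γ := by linarith
  have hγ₁ : 1 < γ := by linarith
  have hpressure : Integrable fun x ↦ ρ x ^ γ :=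
    integrable_rpow_of_integrable_energy hγ₁ hρ hρ₀ henergy
  have hργ : MemLp ρ (ENNReal.ofReal γ) := memLp_of_integrable_energy hγ₁ hρ hρ₀ henergy
  have hconv : MemLp (fun x i j ↦ ρ x * u x i * u x j) 2 := .of_eval fun i ↦ .of_eval fun j ↦
    memLp_two_mul_mul_of_six_le (by simpa using ENNReal.ofReal_le_ofReal hγ) hργ (hu.eval i)
      (hu.eval j) (integrable_mul_mul_of_integrable_energy hγ₁ hρ hρ₀ hu.1.aemeasurable henergy i j)
  have hpressure₂ : MemLp (fun x ↦ ρ x ^ γ) 2 :=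
    memLp_two_of_momentumBalance hpressure hconv hσ hf hmomentum
  simpa [ENNReal.ofReal_mul] using (memLp_rpow_iff_of_nonneg hρ hρ₀ hγ₀ 2).1 hpressure₂

/-- **Corollary.** Let `(ρ, u)` be a weak solution of the stationary isentropic system on `ℝ³`
with `γ ≥ 6` and `G ∈ D₀^{1, 6γ/(5γ−6)}(ℝ³)`. If the total energy
`∫_{ℝ³} ((1/2) ρ|u|² + ρ^γ/(γ−1))` is finite, then `ρ ∈ L^{2γ}(ℝ³)`. -/
theorem higher_integrability_finite_energy
    (μ η γ : ℝ) (hμ : 0 < μ) (hη : 0 ≤ η) (hγ : 6 ≤ γ)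
    (G : E3 → ℝ) (dG : E3 → Fin 3 → ℝ)
    (ρ : E3 → ℝ) (u : E3 → Fin 3 → ℝ) (du : E3 → Fin 3 → Fin 3 → ℝ)
    (hG : MemD01q univ G dG (6 * γ / (5 * γ - 6)))
    (hsol : IsentropicWeakSolution μ η γ G dG ρ u du)
    (henergy : Integrable
      (fun x => (1 / 2) * ρ x * (∑ i, (u x i) ^ 2) + ρ x ^ γ / (γ - 1)) volume) :
    MemLp ρ (ENNReal.ofReal (2 * γ)) volume :=
  higher_integrability_finite_energy_general hγ hsol.aemeas_ρ hsol.ae_nonneg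
    (memLp_six_of_memD012 hsol.u_D012) (memLp_Smat_of_memD012 hsol.u_D012)
    (hsol.memLp_force (by linarith) hG henergy) hsol.momentumBalance henergy
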